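/- (Kernel bound for the fractional seminorm.) Let β ∈ (0,1). There exists a constant C = C(β) > 0 such that for every k₁ ∈ ℝ and every k₂ > 0, ∫_{z₁∈ℝ} ∫_{z₂=0}^∞ |e^{i k₁ z₁ - k₂ z₂} - 1|² / (z₁² + z₂²)^{1+β} dz₂ dz₁ ≤ C (k₁² + k₂²)^β. -/

import Mathlib

open MeasureTheory Set
open scoped ENNReal NNReal

/-!
On the closed left half-plane `|e ^ w - 1| ≤ min |w| 2`, so with `s = z₁² + z₂²` and `L = k₁² + k₂²`
the integrand is at most the radial function `min (L s) 4 / s ^ (1 + β)`. Enlarge the half-plane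
to the whole plane: by polar coordinates, Lebesgue measure pushes forward under `z ↦ s` to `π ds` on
`(0, ∞)`, and `∫ min (L s) 4 / s ^ (1 + β) ds = 4 ^ (1 - β) L ^ β / (β (1 - β))`. The singularity
at `0` is integrable because `β < 1`, the tail because `0 < β`.
-/

section ComplexExp

variable {w : ℂ}

lemma norm_exp_le_one_of_re_nonpos (hw : w.re ≤ 0) : ‖Complex.exp w‖ ≤ 1 := by
  rw [Complex.norm_exp]
  exact Real.exp_le_one_iff.2 hw

lemma norm_exp_sub_one_le_norm_of_re_nonpos (hw : w.re ≤ 0) : ‖Complex.exp w - 1‖ ≤ ‖w‖ := by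
  have hlip := (convex_halfSpace_re_le 0).norm_image_sub_le_of_norm_hasDerivWithin_le
    (fun z _ ↦ (Complex.hasDerivAt_exp z).hasDerivWithinAt)
    (fun _ hz ↦ norm_exp_le_one_of_re_nonpos hz) Complex.zero_re.le hw
  simpa using hlip

lemma norm_exp_sub_one_le_two_of_re_nonpos (hw : w.re ≤ 0) : ‖Complex.exp w - 1‖ ≤ 2 :=
  calc ‖Complex.exp w - 1‖ ≤ ‖Complex.exp w‖ + ‖(1 : ℂ)‖ := norm_sub_le _ _
    _ ≤ 1 + 1 := add_le_add (norm_exp_le_one_of_re_nonpos hw) norm_one.le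
    _ = 2 := one_add_one_eq_two

lemma sq_norm_exp_sub_one_le_min (hw : w.re ≤ 0) :
    ‖Complex.exp w - 1‖ ^ 2 ≤ min (‖w‖ ^ 2) 4 := by
  refine le_min ?_ ?_
  · gcongr
    exact norm_exp_sub_one_le_norm_of_re_nonpos hw
  · calc ‖Complex.exp w - 1‖ ^ 2 ≤ 2 ^ 2 := by
          gcongr
          exact norm_exp_sub_one_le_two_of_re_nonpos hw
      _ = 4 := by norm_num

lemma sq_norm_I_mul_sub_mul_le (k₁ k₂ z₁ z₂ : ℝ) :
    ‖Complex.I * k₁ * z₁ - k₂ * z₂‖ ^ 2 ≤ (k₁ ^ 2 + k₂ ^ 2) * (z₁ ^ 2 + z₂ ^ 2) := by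
  have hnorm : ‖Complex.I * k₁ * z₁ - k₂ * z₂‖ ^ 2 = (k₂ * z₂) ^ 2 + (k₁ * z₁) ^ 2 := by
    rw [← Complex.normSq_eq_norm_sq, Complex.normSq_apply]
    simp [sq]
  rw [hnorm]
  nlinarith [sq_nonneg (k₁ * z₂), sq_nonneg (k₂ * z₁)]

lemma sq_norm_exp_I_mul_sub_mul_sub_one_le_min (k₁ z₁ : ℝ) {k₂ z₂ : ℝ} (hk₂ : 0 ≤ k₂)
    (hz₂ : 0 ≤ z₂) :
    ‖Complex.exp (Complex.I * k₁ * z₁ - k₂ * z₂) - 1‖ ^ 2 ≤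
      min ((k₁ ^ 2 + k₂ ^ 2) * (z₁ ^ 2 + z₂ ^ 2)) 4 := by
  have hre : (Complex.I * k₁ * z₁ - k₂ * z₂).re ≤ 0 := by
    simpa using mul_nonneg hk₂ hz₂
  exact (sq_norm_exp_sub_one_le_min hre).trans
    (min_le_min_right 4 (sq_norm_I_mul_sub_mul_le k₁ k₂ z₁ z₂))

end ComplexExp

section RadialIntegral

lemma image_sq_Ioi_zero : (fun r : ℝ ↦ r ^ 2) '' Ioi 0 = Ioi 0 := by
  ext s
  constructor
  · rintro ⟨r, hr, rfl⟩
    exact pow_pos (mem_Ioi.1 hr) 2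
  · exact fun hs ↦ ⟨√s, Real.sqrt_pos.2 hs, Real.sq_sqrt (le_of_lt hs)⟩

lemma lintegral_Ioi_zero_comp_sq (f : ℝ → ℝ≥0∞) :
    ∫⁻ r in Ioi (0 : ℝ), ENNReal.ofReal (2 * r) * f (r ^ 2) = ∫⁻ s in Ioi (0 : ℝ), f s := by
  have hderiv (r : ℝ) : HasDerivWithinAt (fun r : ℝ ↦ r ^ 2) (2 * r) (Ioi 0) r := by
    simpa using (hasDerivAt_pow 2 r).hasDerivWithinAt
  have hmono : MonotoneOn (fun r : ℝ ↦ r ^ 2) (Ioi 0) :=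
    fun r hr _ _ hrs ↦ pow_le_pow_left₀ (le_of_lt hr) hrs 2
  rw [← lintegral_image_eq_lintegral_deriv_mul_of_monotoneOn measurableSet_Ioi
    (fun r _ ↦ hderiv r) hmono f, image_sq_Ioi_zero]

lemma lintegral_lintegral_comp_sq_add_sq {f : ℝ → ℝ≥0∞} (hf : Measurable f) :
    ∫⁻ x : ℝ, ∫⁻ y : ℝ, f (x ^ 2 + y ^ 2) =
      ENNReal.ofReal Real.pi * ∫⁻ s in Ioi (0 : ℝ), f s :=
  calc ∫⁻ x : ℝ, ∫⁻ y : ℝ, f (x ^ 2 + y ^ 2)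
      = ∫⁻ p : ℝ × ℝ, f (p.1 ^ 2 + p.2 ^ 2) := by
        rw [Measure.volume_eq_prod, lintegral_prod _ (by fun_prop)]
    _ = ∫⁻ p in Ioi (0 : ℝ) ×ˢ Ioo (-Real.pi) Real.pi, ENNReal.ofReal p.1 * f (p.1 ^ 2) := by
        rw [← lintegral_comp_polarCoord_symm, polarCoord_target]
        refine lintegral_congr fun p ↦ ?_
        simp only [polarCoord_symm_apply, smul_eq_mul]
        congr 2
        linear_combination p.1 ^ 2 * Real.cos_sq_add_sin_sq p.2
    _ = ∫⁻ r in Ioi (0 : ℝ), ENNReal.ofReal Real.pi * (ENNReal.ofReal (2 * r) * f (r ^ 2)) := by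
        rw [Measure.volume_eq_prod, ← Measure.prod_restrict, lintegral_prod _ (by fun_prop)]
        refine setLIntegral_congr_fun measurableSet_Ioi fun r hr ↦ ?_
        have hangle : ENNReal.ofReal r * ENNReal.ofReal (Real.pi - -Real.pi) =
            ENNReal.ofReal Real.pi * ENNReal.ofReal (2 * r) := by
          rw [← ENNReal.ofReal_mul (le_of_lt hr), ← ENNReal.ofReal_mul Real.pi_pos.le]
          ring_nf
        dsimp only
        rw [setLIntegral_const, Real.volume_Ioo, mul_right_comm, hangle, mul_assoc]
    _ = ENNReal.ofReal Real.pi * ∫⁻ s in Ioi (0 : ℝ), f s := by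
        rw [lintegral_const_mul _ (by fun_prop), lintegral_Ioi_zero_comp_sq]

end RadialIntegral

section PowerIntegral

lemma lintegral_Ioc_zero_rpow {p R : ℝ} (hp : -1 < p) (hR : 0 ≤ R) :
    ∫⁻ s in Ioc 0 R, ENNReal.ofReal (s ^ p) = ENNReal.ofReal (R ^ (p + 1) / (p + 1)) := by
  have hint : IntegrableOn (fun s : ℝ ↦ s ^ p) (Ioc 0 R) :=
    (intervalIntegrable_iff_integrableOn_Ioc_of_le hR).1
      (intervalIntegral.intervalIntegrable_rpow' hp)
  have hnonneg : 0 ≤ᵐ[volume.restrict (Ioc 0 R)] fun s : ℝ ↦ s ^ p :=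
    ae_restrict_of_forall_mem measurableSet_Ioc fun s hs ↦ Real.rpow_nonneg hs.1.le p
  rw [← ofReal_integral_eq_lintegral_ofReal hint hnonneg, ← intervalIntegral.integral_of_le hR,
    integral_rpow (Or.inl hp), Real.zero_rpow (by linarith), sub_zero]

lemma lintegral_Ioi_rpow_of_lt {p R : ℝ} (hp : p < -1) (hR : 0 < R) :
    ∫⁻ s in Ioi R, ENNReal.ofReal (s ^ p) = ENNReal.ofReal (-R ^ (p + 1) / (p + 1)) := by
  have hnonneg : 0 ≤ᵐ[volume.restrict (Ioi R)] fun s : ℝ ↦ s ^ p :=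
    ae_restrict_of_forall_mem measurableSet_Ioi fun s hs ↦ Real.rpow_nonneg (hR.trans hs).le p
  rw [← ofReal_integral_eq_lintegral_ofReal (integrableOn_Ioi_rpow_of_lt hp hR) hnonneg,
    integral_Ioi_rpow_of_lt hp hR]

variable {β : ℝ}

lemma lintegral_Ioc_zero_min_div_rpow {R : ℝ} (hβ : β < 1) (hR : 0 ≤ R) :
    ∫⁻ s in Ioc 0 R, ENNReal.ofReal (min s R / s ^ (1 + β)) =
      ENNReal.ofReal (R ^ (1 - β) / (1 - β)) := by
  have hpow : ∀ s ∈ Ioc 0 R, min s R / s ^ (1 + β) = s ^ (-β) := fun s hs ↦ by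
    rw [min_eq_left hs.2, Real.rpow_neg hs.1.le, Real.rpow_add hs.1, Real.rpow_one,
      div_mul_cancel_left₀ hs.1.ne']
  rw [setLIntegral_congr_fun measurableSet_Ioc fun s hs ↦ congrArg ENNReal.ofReal (hpow s hs),
    lintegral_Ioc_zero_rpow (by linarith) hR, neg_add_eq_sub]

lemma lintegral_Ioi_min_div_rpow {R : ℝ} (hβ : 0 < β) (hR : 0 < R) :
    ∫⁻ s in Ioi R, ENNReal.ofReal (min s R / s ^ (1 + β)) = ENNReal.ofReal (R ^ (1 - β) / β) := by
  have hpow : ∀ s ∈ Ioi R,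
      ENNReal.ofReal (min s R / s ^ (1 + β)) = ENNReal.ofReal R * ENNReal.ofReal (s ^ (-(1 + β))) :=
    fun s hs ↦ by
      rw [min_eq_right (le_of_lt hs), Real.rpow_neg (hR.trans hs).le, div_eq_mul_inv,
        ENNReal.ofReal_mul hR.le]
  rw [setLIntegral_congr_fun measurableSet_Ioi hpow, lintegral_const_mul _ (by fun_prop),
    lintegral_Ioi_rpow_of_lt (by linarith) hR, ← ENNReal.ofReal_mul hR.le]
  congr 1
  rw [show -(1 + β) + 1 = -β by ring, neg_div_neg_eq, mul_div_assoc', sub_eq_add_neg,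
    Real.rpow_add hR, Real.rpow_one]

lemma lintegral_Ioi_zero_min_div_rpow {R : ℝ} (hβ : β ∈ Ioo 0 1) (hR : 0 < R) :
    ∫⁻ s in Ioi (0 : ℝ), ENNReal.ofReal (min s R / s ^ (1 + β)) =
      ENNReal.ofReal (R ^ (1 - β) / (β * (1 - β))) := by
  have hβ₀ : 0 < β := hβ.1
  have hβ₁ : 0 < 1 - β := sub_pos.2 hβ.2
  rw [← Ioc_union_Ioi_eq_Ioi hR.le, lintegral_union measurableSet_Ioi Ioc_disjoint_Ioi_same,
    lintegral_Ioc_zero_min_div_rpow hβ.2 hR.le, lintegral_Ioi_min_div_rpow hβ₀ hR,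
    ← ENNReal.ofReal_add (by positivity) (by positivity)]
  congr 1
  field_simp
  ring

lemma lintegral_Ioi_zero_min_mul_div_rpow {a b : ℝ} (hβ : β ∈ Ioo 0 1) (ha : 0 < a) (hb : 0 < b) :
    ∫⁻ s in Ioi (0 : ℝ), ENNReal.ofReal (min (a * s) b / s ^ (1 + β)) =
      ENNReal.ofReal (b ^ (1 - β) / (β * (1 - β)) * a ^ β) := by
  have hscale (s : ℝ) : min (a * s) b / s ^ (1 + β) = a * (min s (b / a) / s ^ (1 + β)) := by
    rw [← mul_div_assoc, mul_min_of_nonneg _ _ ha.le, mul_div_cancel₀ b ha.ne']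
  have hhom : a * (b / a) ^ (1 - β) = b ^ (1 - β) * a ^ β := by
    rw [Real.div_rpow hb.le ha.le, Real.rpow_sub ha, Real.rpow_one]
    field_simp
  simp_rw [hscale, ENNReal.ofReal_mul ha.le]
  rw [lintegral_const_mul _ (by fun_prop), lintegral_Ioi_zero_min_div_rpow hβ (div_pos hb ha),
    ← ENNReal.ofReal_mul ha.le, mul_div_assoc', hhom, mul_div_right_comm]

end PowerIntegral

/-- Kernel bound for the Gagliardo fractional seminorm of order β of the non-oscillatory
component of the unified transform solution. -/
theorem fractional_seminorm_kernel_bound (β : ℝ) (hβ : β ∈ Set.Ioo (0:ℝ) 1) :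
    ∃ C : ℝ, 0 < C ∧ ∀ (k₁ k₂ : ℝ), 0 < k₂ →
      (∫⁻ z₁ : ℝ, ∫⁻ z₂ in Ioi (0:ℝ),
          ENNReal.ofReal
            (‖Complex.exp (Complex.I * (k₁:ℂ) * (z₁:ℂ) - (k₂:ℂ) * (z₂:ℂ)) - 1‖ ^ 2
              / (z₁^2 + z₂^2) ^ (1 + β)))
        ≤ ENNReal.ofReal (C * (k₁^2 + k₂^2) ^ β) := by
  have hβ₀ : 0 < β := hβ.1
  have hβ₁ : 0 < 1 - β := sub_pos.2 hβ.2
  refine ⟨Real.pi * (4 ^ (1 - β) / (β * (1 - β))), by positivity, fun k₁ k₂ hk₂ ↦ ?_⟩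
  let majorant (s : ℝ) : ℝ≥0∞ := ENNReal.ofReal (min ((k₁ ^ 2 + k₂ ^ 2) * s) 4 / s ^ (1 + β))
  calc _ ≤ ∫⁻ z₁ : ℝ, ∫⁻ z₂ in Ioi (0 : ℝ), majorant (z₁ ^ 2 + z₂ ^ 2) := by
        refine lintegral_mono fun z₁ ↦ setLIntegral_mono' measurableSet_Ioi fun z₂ hz₂ ↦ ?_
        dsimp only [majorant]
        gcongr
        exact sq_norm_exp_I_mul_sub_mul_sub_one_le_min k₁ z₁ hk₂.le (le_of_lt hz₂)
    _ ≤ ∫⁻ z₁ : ℝ, ∫⁻ z₂ : ℝ, majorant (z₁ ^ 2 + z₂ ^ 2) :=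
        lintegral_mono fun z₁ ↦ setLIntegral_le_lintegral _ _
    _ = ENNReal.ofReal Real.pi * ∫⁻ s in Ioi (0 : ℝ), majorant s :=
        lintegral_lintegral_comp_sq_add_sq (by fun_prop)
    _ = _ := by
        rw [lintegral_Ioi_zero_min_mul_div_rpow hβ (by positivity) four_pos,
          ← ENNReal.ofReal_mul Real.pi_pos.le, mul_assoc]
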